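/- Let M ≥ 3, let τ be a symmetric real M×M matrix (indices 1,…,M) and g a symmetric invertible real M×M matrix, and suppose τ_{11}τ_{22} ≥ 0 and R₁₂₁₂ := τ_{11}τ_{22} − τ_{12}² ≥ 0. Define κ² = det(τ g⁻¹ τ)/det g, and let Δ_{τ11}, Δ_{τ22}, Δ_{τ12}, Δ_{τ21} be the determinants of the Chiò condensations of τ with respect to the pivot entries τ_{11}, τ_{22}, τ_{12}, τ_{21} respectively. Then κ² (det g)² R₁₂₁₂^{M−2} = [ (Δ_{τ11} Δ_{τ22})^{1/(M−2)} − (Δ_{τ12} Δ_{τ21})^{1/(M−2)} ]^{M−2}, where x^{1/(M−2)} denotes the real (M−2)-th root of the nonnegative real x. -/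

import Mathlib

/-!
Scaling every row of `A` except the pivot row `p` by the pivot `A p q`, and then subtracting
multiples of row `p`, turns column `q` into a multiple of a basis vector; expanding along it gives
Chiò's formula `det (chioCondensation A p q) = (-1) ^ (p + q) * A p q ^ (M - 2) * det A`, once the
pivot has been cancelled. Hence `Δ₁₁ Δ₂₂` and `Δ₁₂ Δ₂₁` are `(M - 2)`-th powers times the common
factor `(det τ)² = κ² (det g)²`, and taking roots extracts the entries of the `2 × 2` minor.
-/

open Matrix

/-- The Chiò condensation of a matrix with respect to the pivot `A p q`; the rows other than `p`
and the columns other than `q` are enumerated increasingly by `Fin.succAbove`. -/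
def chioCondensation {R : Type*} [CommRing R] {m n : ℕ}
    (A : Matrix (Fin (m + 1)) (Fin (n + 1)) R) (p : Fin (m + 1)) (q : Fin (n + 1)) :
    Matrix (Fin m) (Fin n) R :=
  of fun i j =>
    A p q * A (p.succAbove i) (q.succAbove j) - A (p.succAbove i) q * A p (q.succAbove j)

/-- The square `κ²` of the curvature of a hypersurface with metric `g` and matrix scheme of
curvature vectors `τ`. It is meaningful only for invertible `g`: otherwise `g⁻¹ = 0`. -/
noncomputable def curvatureSq {ι K : Type*} [Fintype ι] [DecidableEq ι] [Field K]
    (τ g : Matrix ι ι K) : K :=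
  (τ * g⁻¹ * τ).det / g.det

section Condensation

variable {R : Type*} [CommRing R] {n : ℕ}

theorem chioCondensation_map {S : Type*} [CommRing S] {m : ℕ} (f : R →+* S)
    (A : Matrix (Fin (m + 1)) (Fin (n + 1)) R) (p : Fin (m + 1)) (q : Fin (n + 1)) :
    chioCondensation (A.map f) p q = (chioCondensation A p q).map f := by
  ext i j
  simp [chioCondensation]

theorem det_eq_of_column_eq_zero_off_pivot (B : Matrix (Fin (n + 1)) (Fin (n + 1)) R)
    {p q : Fin (n + 1)} (hB : ∀ i, B (p.succAbove i) q = 0) :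
    B.det = (-1) ^ (p + q : ℕ) * B p q * (B.submatrix p.succAbove q.succAbove).det := by
  rw [det_succ_column B q, Fin.sum_univ_succAbove _ p]
  simp [hB]

theorem pivot_mul_det_chioCondensation (A : Matrix (Fin (n + 1)) (Fin (n + 1)) R)
    (p q : Fin (n + 1)) :
    A p q * (chioCondensation A p q).det = (-1) ^ (p + q : ℕ) * A p q ^ n * A.det := by
  let scale : Fin (n + 1) → R := p.insertNth 1 fun _ => A p q
  let scaled : Matrix (Fin (n + 1)) (Fin (n + 1)) R := of fun i j => scale i * A i j
  let reduced : Matrix (Fin (n + 1)) (Fin (n + 1)) R :=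
    of (p.insertNth (A p) fun i j => A p q * A (p.succAbove i) j - A (p.succAbove i) q * A p j)
  have det_scaled : scaled.det = A p q ^ n * A.det := by
    rw [det_mul_column, Fin.prod_univ_succAbove _ p]
    simp [scale]
  have det_reduced : scaled.det = reduced.det := by
    refine det_eq_of_forall_row_eq_smul_add_const
      (p.insertNth 0 fun i => A (p.succAbove i) q) p (by simp) fun i j => ?_
    cases i using p.succAboveCases <;> simp [scaled, scale, reduced]
  have det_expand : reduced.det = (-1) ^ (p + q : ℕ) * A p q * (chioCondensation A p q).det := by
    have minor : reduced.submatrix p.succAbove q.succAbove = chioCondensation A p q := by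
      ext i j
      simp [reduced, chioCondensation]
    have column_zero : ∀ i, reduced (p.succAbove i) q = 0 := fun i => by simp [reduced, mul_comm]
    rw [det_eq_of_column_eq_zero_off_pivot reduced column_zero, minor]
    simp [reduced]
  calc A p q * (chioCondensation A p q).det
      = (-1) ^ (p + q : ℕ) * reduced.det := by
        rw [det_expand, ← mul_assoc, ← mul_assoc, ← mul_pow]
        simp
    _ = (-1) ^ (p + q : ℕ) * A p q ^ n * A.det := by
        rw [← det_reduced, det_scaled, mul_assoc]

theorem det_chioCondensation (A : Matrix (Fin (n + 2)) (Fin (n + 2)) R) (p q : Fin (n + 2)) :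
    (chioCondensation A p q).det = (-1) ^ (p + q : ℕ) * A p q ^ n * A.det := by
  -- The identity is polynomial in the entries, and the generic pivot can be cancelled.
  let X := mvPolynomialX (Fin (n + 2)) (Fin (n + 2)) ℤ
  have generic : (chioCondensation X p q).det = (-1) ^ (p + q : ℕ) * X p q ^ n * X.det := by
    have pivot_ne_zero : X p q ≠ 0 := MvPolynomial.X_ne_zero (p, q)
    refine mul_left_cancel₀ pivot_ne_zero ?_
    rw [pivot_mul_det_chioCondensation]
    ring
  let φ : MvPolynomial (Fin (n + 2) × Fin (n + 2)) ℤ →+* R :=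
    (MvPolynomial.aeval fun ij => A ij.1 ij.2).toRingHom
  have map_X : X.map φ = A := mvPolynomialX_mapMatrix_aeval ℤ A
  have map_pivot : φ (X p q) = A p q := congrFun₂ map_X p q
  have map_generic := congrArg φ generic
  simpa only [RingHom.map_det, RingHom.mapMatrix_apply, ← chioCondensation_map, map_mul, map_pow,
    map_neg, map_one, map_X, map_pivot] using map_generic

theorem det_chioCondensation_mul_diagonal (A : Matrix (Fin (n + 2)) (Fin (n + 2)) R)
    (p r : Fin (n + 2)) :
    (chioCondensation A p p).det * (chioCondensation A r r).det =
      (A p p * A r r) ^ n * A.det ^ 2 := by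
  simp only [det_chioCondensation, Even.neg_one_pow (Even.add_self _)]
  ring

theorem det_chioCondensation_mul_swap (A : Matrix (Fin (n + 2)) (Fin (n + 2)) R)
    (p r : Fin (n + 2)) :
    (chioCondensation A p r).det * (chioCondensation A r p).det =
      (A p r * A r p) ^ n * A.det ^ 2 := by
  have sign_sq : ((-1 : R) ^ (p + r : ℕ)) ^ 2 = 1 := by simp [← pow_mul]
  rw [det_chioCondensation, det_chioCondensation, add_comm (r : ℕ)]
  linear_combination (A p r * A r p) ^ n * A.det ^ 2 * sign_sq

end Condensation

theorem curvatureSq_mul_det_sq {ι K : Type*} [Fintype ι] [DecidableEq ι] [Field K]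
    (τ : Matrix ι ι K) {g : Matrix ι ι K} (hg : IsUnit g.det) :
    curvatureSq τ g * g.det ^ 2 = τ.det ^ 2 := by
  have hg_ne : g.det ≠ 0 := hg.ne_zero
  rw [curvatureSq, det_mul, det_mul, det_nonsing_inv, Ring.inverse_eq_inv']
  field_simp

theorem sub_rpow_inv_natCast_pow_of_common_factor {n : ℕ} (hn : n ≠ 0) {x y d : ℝ}
    (hx : 0 ≤ x) (hy : 0 ≤ y) (hd : 0 ≤ d) :
    ((x ^ n * d) ^ (n : ℝ)⁻¹ - (y ^ n * d) ^ (n : ℝ)⁻¹) ^ n = d * (x - y) ^ n := by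
  rw [Real.mul_rpow (pow_nonneg hx n) hd, Real.mul_rpow (pow_nonneg hy n) hd,
    Real.pow_rpow_inv_natCast hx hn, Real.pow_rpow_inv_natCast hy hn, ← sub_mul, mul_pow,
    Real.rpow_inv_natCast_pow hd hn, mul_comm]

theorem curvature_functional_expression_general {n : ℕ} (hn : n ≠ 0)
    (τ : Matrix (Fin (n + 2)) (Fin (n + 2)) ℝ) {g : Matrix (Fin (n + 2)) (Fin (n + 2)) ℝ}
    (hg : IsUnit g.det) (p r : Fin (n + 2))
    (hdiag : 0 ≤ τ p p * τ r r) (hswap : 0 ≤ τ p r * τ r p) :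
    curvatureSq τ g * g.det ^ 2 * (τ p p * τ r r - τ p r * τ r p) ^ n =
      (((chioCondensation τ p p).det * (chioCondensation τ r r).det) ^ (n : ℝ)⁻¹ -
        ((chioCondensation τ p r).det * (chioCondensation τ r p).det) ^ (n : ℝ)⁻¹) ^ n := by
  rw [curvatureSq_mul_det_sq τ hg, det_chioCondensation_mul_diagonal,
    det_chioCondensation_mul_swap,
    sub_rpow_inv_natCast_pow_of_common_factor hn hdiag hswap (sq_nonneg τ.det)]

/-- for `M = m + 3 ≥ 3`, a symmetric real `M × M` matrix `τ` and a symmetric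
invertible real `M × M` matrix `g` with `τ₁₁ τ₂₂ ≥ 0` and `R₁₂₁₂ = τ₁₁ τ₂₂ - τ₁₂² ≥ 0`,
the curvature `κ² = det (τ g⁻¹ τ) / det g` and the determinants `Δ_{τpq}` of the Chiò
condensations of `τ` with respect to the pivots `τ₁₁, τ₂₂, τ₁₂, τ₂₁` satisfy
`κ² (det g)² R₁₂₁₂^(M-2) = ((Δ_{τ11} Δ_{τ22})^(1/(M-2)) - (Δ_{τ12} Δ_{τ21})^(1/(M-2)))^(M-2)`,
the `(M-2)`-th roots being real powers (`Real.rpow`). -/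
theorem curvature_functional_expression {m : ℕ}
    (τ g : Matrix (Fin (m + 3)) (Fin (m + 3)) ℝ)
    (hτ : τ.IsSymm) (hg : g.IsSymm) (hginv : IsUnit g.det)
    (h11 : 0 ≤ τ 0 0 * τ 1 1)
    (hR1212 : 0 ≤ τ 0 0 * τ 1 1 - τ 0 1 ^ 2)
    (κ2 : ℝ) (hκ2 : κ2 = (τ * g⁻¹ * τ).det / g.det)
    (Δ11 Δ22 Δ12 Δ21 : ℝ)
    (hΔ11 : Δ11 = Matrix.det (Matrix.of fun i j : Fin (m + 2) =>
      τ 0 0 * τ i.succ j.succ - τ i.succ 0 * τ 0 j.succ))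
    (hΔ22 : Δ22 = Matrix.det (Matrix.of fun i j : Fin (m + 2) =>
      τ 1 1 * τ ((1 : Fin (m + 3)).succAbove i) ((1 : Fin (m + 3)).succAbove j)
        - τ ((1 : Fin (m + 3)).succAbove i) 1 * τ 1 ((1 : Fin (m + 3)).succAbove j)))
    (hΔ12 : Δ12 = Matrix.det (Matrix.of fun i j : Fin (m + 2) =>
      τ 0 1 * τ i.succ ((1 : Fin (m + 3)).succAbove j)
        - τ i.succ 1 * τ 0 ((1 : Fin (m + 3)).succAbove j)))
    (hΔ21 : Δ21 = Matrix.det (Matrix.of fun i j : Fin (m + 2) =>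
      τ 1 0 * τ ((1 : Fin (m + 3)).succAbove i) j.succ
        - τ ((1 : Fin (m + 3)).succAbove i) 0 * τ 1 j.succ)) :
    κ2 * g.det ^ 2 * (τ 0 0 * τ 1 1 - τ 0 1 ^ 2) ^ (m + 1) =
      ((Δ11 * Δ22) ^ (((m : ℝ) + 1))⁻¹ - (Δ12 * Δ21) ^ (((m : ℝ) + 1))⁻¹) ^ (m + 1) := by
  have hτ10 : τ 1 0 = τ 0 1 := hτ.apply 0 1
  have hswap : 0 ≤ τ 0 1 * τ 1 0 := hτ10 ▸ mul_self_nonneg (τ 0 1)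
  subst hκ2 hΔ11 hΔ22 hΔ12 hΔ21
  simpa [curvatureSq, chioCondensation, hτ10, sq] using
    curvature_functional_expression_general m.succ_ne_zero τ hginv 0 1 h11 hswap
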